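/- Degree-3 modular differential equation for the fourth power of the Jacobi theta series: with all heat operators taken with index m = 2, the function ϑ(τ,z)⁴ satisfies H^{(2)}_{6}(H^{(2)}_{4}(H^{(2)}_{2}(ϑ⁴)))(τ,z) − (23/4)·E₄(τ)·H^{(2)}_{2}(ϑ⁴)(τ,z) + (81/4)·E₆(τ)·ϑ(τ,z)⁴ = 0 for all (τ,z) ∈ ℍ × ℂ. -/

import Mathlib

/-!
Write `D = (1/2πi) ∂/∂τ`, `∂ = (1/2πi) ∂/∂z` and `ϑ_k = ∂^k ϑ`. The heat equation `D ϑ = ϑ_2 / 2`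
turns every iterated heat operator applied to `ϑ⁴` into a polynomial in the `ϑ_k` and in `E₂`, `E₄`
and their derivatives. The function `P = E₂/12 - ∂² log ϑ` is the normalised Weierstrass function, and
one finds `H_2 ϑ⁴ = -18 ϑ⁴ P` and `H_4 H_2 ϑ⁴ = ϑ⁴ (54 P² + (39/8) E₄)`; the theorem is then the cubic
equation of `P` together with Ramanujan's equations for `D E₂` and `D E₄`.

Ramanujan's equations (`ramanujan2`, `ramanujan4`) hold because the differences of both sides are cusp
forms of weight less than 12. The second order equation of `P` is the bilinear identity
`bilinear_Th`. A product of two values of `ϑ` is a combination of two theta functions at `2τ` with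
coefficients independent of `z` (`prVal_expand`), so a bilinear expression in the `ϑ_k` of the relevant
type vanishes identically once two constants do; these are determined by the odd derivatives of `ϑ`
at its zero `z = 0`. Those derivatives are computed from `ϑ_1(τ,0)⁸ = c η(τ)²⁴` (`exists_Tt_one_eta`),
which holds because the left-hand side is a cusp form of weight 12. The cubic equation (`cubic_Th`)
follows from the bilinear identity and its derivatives `∂`, `∂²` and `D`. All identities are kept
polynomial in the `ϑ_k`, so that zeros of `ϑ` need no separate treatment.
-/


open Complex Real

noncomputable section

/-- The Jacobi theta series `ϑ(τ,z) = q^{1/8} ζ^{1/2} ∑_{n∈ℤ} (−1)^n q^{n(n+1)/2} ζ^n`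
with `q = e^{2πiτ}`, `ζ = e^{2πiz}`. -/
def thetaJ (τ z : ℂ) : ℂ :=
  Complex.exp (π * I * τ / 4) * Complex.exp (π * I * z) *
    ∑' n : ℤ, (-1 : ℂ) ^ n * Complex.exp (π * I * τ * n * (n + 1)) *
      Complex.exp (2 * π * I * z * n)

/-- The Dedekind eta function `η(τ) = q^{1/24} ∏_{n≥1} (1 − q^n)`. -/
def etaD (τ : ℂ) : ℂ :=
  Complex.exp (π * I * τ / 12) * ∏' n : ℕ, (1 - Complex.exp (2 * π * I * τ * (n + 1)))

/-- The divisor power sum `σ_k(n) = ∑_{d ∣ n} d^k`. -/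
def sigmaD (k n : ℕ) : ℕ := ∑ d ∈ n.divisors, d ^ k

/-- The quasi-modular Eisenstein series `E₂`. -/
def Eis2 (τ : ℂ) : ℂ :=
  1 - 24 * ∑' n : ℕ, (sigmaD 1 (n + 1) : ℂ) * Complex.exp (2 * π * I * τ * (n + 1))

/-- The Eisenstein series `E₄`. -/
def Eis4 (τ : ℂ) : ℂ :=
  1 + 240 * ∑' n : ℕ, (sigmaD 3 (n + 1) : ℂ) * Complex.exp (2 * π * I * τ * (n + 1))

/-- The Eisenstein series `E₆`. -/
def Eis6 (τ : ℂ) : ℂ :=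
  1 - 504 * ∑' n : ℕ, (sigmaD 5 (n + 1) : ℂ) * Complex.exp (2 * π * I * τ * (n + 1))

/-- The heat operator `H^{(m)}φ = (12/(2πi)) ∂φ/∂τ + (3/(4π²m)) ∂²φ/∂z²` of index `m`. -/
def heatOp (m : ℚ) (φ : ℂ → ℂ → ℂ) (τ z : ℂ) : ℂ :=
  12 / (2 * π * I) * deriv (fun t => φ t z) τ
    + 3 / (4 * π ^ 2 * (m : ℂ)) * deriv (deriv (φ τ)) z

/-- The modular heat operator `H^{(m)}_k φ = H^{(m)}φ − ((2k−1)/2)·E₂·φ`. -/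
def heatMod (m k : ℚ) (φ : ℂ → ℂ → ℂ) (τ z : ℂ) : ℂ :=
  heatOp m φ τ z - (2 * (k : ℂ) - 1) / 2 * Eis2 τ * φ τ z

open Filter Topology

/-! ### Normalised derivatives -/

/-- `HD f d x` says that the normalised derivative `(1/2πi) f'` of `f` at `x` exists and equals
`d`. In `τ` this is `q d/dq`, in `z` it is `ζ d/dζ`; all factors of `π` disappear this way. -/
def HD (f : ℂ → ℂ) (d x : ℂ) : Prop := HasDerivAt f (2 * π * I * d) x

lemma HD.congr_val {f : ℂ → ℂ} {d d' x : ℂ} (h : HD f d x) (e : d = d') : HD f d' x := e ▸ h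

lemma HD.add {f g : ℂ → ℂ} {a b x : ℂ} (hf : HD f a x) (hg : HD g b x) :
    HD (fun y => f y + g y) (a + b) x := by
  have := HasDerivAt.add hf hg
  exact this.congr_deriv (by ring)

lemma HD.sub {f g : ℂ → ℂ} {a b x : ℂ} (hf : HD f a x) (hg : HD g b x) :
    HD (fun y => f y - g y) (a - b) x := by
  have := HasDerivAt.sub hf hg
  exact this.congr_deriv (by ring)

lemma HD.mul {f g : ℂ → ℂ} {a b x : ℂ} (hf : HD f a x) (hg : HD g b x) :
    HD (fun y => f y * g y) (a * g x + f x * b) x := by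
  have := HasDerivAt.mul hf hg
  exact this.congr_deriv (by ring)

lemma HD.const (c x : ℂ) : HD (fun _ => c) 0 x := by
  have := hasDerivAt_const x c
  exact this.congr_deriv (by ring)

lemma HD.cmul {f : ℂ → ℂ} {a x : ℂ} (c : ℂ) (hf : HD f a x) :
    HD (fun y => c * f y) (c * a) x := by
  have := HasDerivAt.const_mul c hf
  exact this.congr_deriv (by ring)

lemma HD.pow {f : ℂ → ℂ} {a x : ℂ} (hf : HD f a x) (n : ℕ) :
    HD (fun y => f y ^ n) (n * f x ^ (n - 1) * a) x := by
  have := HasDerivAt.pow hf n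
  exact this.congr_deriv (by ring)

lemma HD.congr {f g : ℂ → ℂ} {a x : ℂ} (hf : HD f a x) (h : g =ᶠ[𝓝 x] f) : HD g a x :=
  HasDerivAt.congr_of_eventuallyEq hf h

lemma HD.unique {f : ℂ → ℂ} {a b x : ℂ} (h₁ : HD f a x) (h₂ : HD f b x) : a = b :=
  mul_left_cancel₀ Complex.two_pi_I_ne_zero (HasDerivAt.unique h₁ h₂)

lemma eventually_im_pos {τ : ℂ} (hτ : 0 < τ.im) : ∀ᶠ t in 𝓝 τ, 0 < t.im :=
  (isOpen_lt continuous_const Complex.continuous_im).mem_nhds hτ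

/-! ### Differentiation of `q`-series -/

/-- The power series `∑_{n ≥ 1} a_{n-1} qⁿ` without constant term, with `q = e^{2πiτ}`; the
coefficient sequence is shifted by one to match the defining sums of the Eisenstein series. -/
def qser (a : ℕ → ℂ) (τ : ℂ) : ℂ := ∑' n : ℕ, a n * Complex.exp (2 * π * I * τ * (n + 1))

/-- Polynomial growth of a coefficient sequence. The absence of a multiplicative constant costs
nothing for divisor sums and makes the property visibly stable under `a n ↦ (n + 1) * a n`. -/
def PolyGrowth (a : ℕ → ℂ) : Prop := ∃ K : ℕ, ∀ n, ‖a n‖ ≤ ((n : ℝ) + 1) ^ K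

lemma norm_qterm (τ : ℂ) (n : ℕ) :
    ‖Complex.exp (2 * π * I * τ * (n + 1))‖ = Real.exp (-(2 * π * τ.im) * (n + 1)) := by
  rw [Complex.norm_exp]
  congr 1
  have : (2 * π * I * τ * (n + 1) : ℂ) = ((2 * π * (n + 1) : ℝ) : ℂ) * (I * τ) := by
    push_cast; ring
  rw [this, Complex.re_ofReal_mul]
  simp; ring

lemma norm_qterm_le {τ : ℂ} {T : ℝ} (h : T ≤ τ.im) (n : ℕ) :
    ‖Complex.exp (2 * π * I * τ * (n + 1))‖ ≤ Real.exp (-(2 * π * T) * (n + 1)) := by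
  rw [norm_qterm, Real.exp_le_exp]
  have : 0 < 2 * π * ((n : ℝ) + 1) := by positivity
  nlinarith

lemma summable_qbound (K : ℕ) {T : ℝ} (hT : 0 < T) :
    Summable fun n : ℕ => ((n : ℝ) + 1) ^ K * Real.exp (-(2 * π * T) * (n + 1)) := by
  have := (summable_nat_add_iff 1).mpr
    (Real.summable_pow_mul_exp_neg_nat_mul K (r := 2 * π * T) (by positivity))
  refine this.congr fun n => ?_
  push_cast
  rfl

lemma summable_qser {a : ℕ → ℂ} (ha : PolyGrowth a) {τ : ℂ} (hτ : 0 < τ.im) :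
    Summable fun n : ℕ => a n * Complex.exp (2 * π * I * τ * (n + 1)) := by
  obtain ⟨K, hK⟩ := ha
  refine Summable.of_norm_bounded (summable_qbound K hτ) fun n => ?_
  rw [norm_mul]
  exact mul_le_mul (hK n) (norm_qterm_le le_rfl n) (norm_nonneg _) (by positivity)

lemma PolyGrowth.succ_mul {a : ℕ → ℂ} (ha : PolyGrowth a) :
    PolyGrowth fun n => ((n : ℂ) + 1) * a n := by
  obtain ⟨K, hK⟩ := ha
  refine ⟨K + 1, fun n => ?_⟩
  rw [norm_mul, pow_succ, mul_comm]
  refine mul_le_mul (hK n) ?_ (norm_nonneg _) (by positivity)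
  have : ((n : ℂ) + 1) = ((n + 1 : ℕ) : ℂ) := by push_cast; ring
  rw [this, Complex.norm_natCast]; push_cast; rfl

lemma hd_qser {a : ℕ → ℂ} (ha : PolyGrowth a) {τ : ℂ} (hτ : 0 < τ.im) :
    HD (qser a) (qser (fun n => ((n : ℂ) + 1) * a n) τ) τ := by
  have ha' := ha
  obtain ⟨K, hK⟩ := ha.succ_mul
  have hT : 0 < τ.im / 2 := by positivity
  have key := hasDerivAt_tsum_of_isPreconnected
    (g := fun (n : ℕ) (t : ℂ) => a n * Complex.exp (2 * π * I * t * (n + 1)))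
    (g' := fun (n : ℕ) (t : ℂ) =>
      2 * π * I * ((((n : ℂ) + 1) * a n) * Complex.exp (2 * π * I * t * (n + 1))))
    (t := {t : ℂ | τ.im / 2 < t.im}) (y₀ := τ) (y := τ)
    ((summable_qbound K hT).mul_left (2 * π))
    (isOpen_lt continuous_const Complex.continuous_im)
    (convex_halfSpace_im_gt _).isPreconnected ?_ ?_ ?_ (summable_qser ha' hτ) ?_
  · unfold HD
    rw [tsum_mul_left] at key
    exact key
  · intro n t _
    have h1 : HasDerivAt (fun t : ℂ => 2 * π * I * t * (n + 1)) (2 * π * I * (n + 1)) t := by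
      have := ((hasDerivAt_id t).const_mul (2 * π * I)).mul_const ((n : ℂ) + 1)
      simpa using this
    exact (h1.cexp.const_mul (a n)).congr_deriv (by ring)
  · intro n t ht
    rw [norm_mul, norm_mul (_ * a n)]
    have : ‖(2 * π * I : ℂ)‖ = 2 * π := by
      simp [abs_of_pos Real.pi_pos]
    rw [this]
    gcongr
    · exact hK n
    · exact norm_qterm_le (le_of_lt ht) n
  · simp only [Set.mem_ofPred_eq]; linarith
  · simp only [Set.mem_ofPred_eq]; linarith

/-- The filter `Im τ → ∞` on `ℂ`. -/
abbrev imInf : Filter ℂ := comap Complex.im atTop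

lemma tendsto_qser {a : ℕ → ℂ} (ha : PolyGrowth a) : Tendsto (qser a) imInf (𝓝 0) := by
  obtain ⟨K, hK⟩ := ha
  have him : Tendsto Complex.im imInf atTop := tendsto_comap
  have := tendsto_tsum_of_dominated_convergence (𝓕 := imInf)
    (f := fun (t : ℂ) (n : ℕ) => a n * Complex.exp (2 * π * I * t * (n + 1)))
    (g := fun _ => (0 : ℂ)) (summable_qbound K one_pos) ?_ ?_
  · simpa using! this
  · intro n
    rw [show (0 : ℂ) = a n * 0 by ring]
    refine Tendsto.const_mul _ ?_
    rw [tendsto_zero_iff_norm_tendsto_zero]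
    simp_rw [norm_qterm]
    refine Real.tendsto_exp_atBot.comp ?_
    have h2 : Tendsto (fun t : ℂ => (2 * π * (n + 1)) * t.im) imInf atTop :=
      him.const_mul_atTop (by positivity)
    refine (tendsto_neg_atTop_atBot.comp h2).congr fun t => ?_
    simp only [Function.comp]; ring
  · filter_upwards [him.eventually_ge_atTop 1] with t ht n
    rw [norm_mul]
    exact mul_le_mul (hK n) (norm_qterm_le ht n) (norm_nonneg _) (by positivity)

lemma polyGrowth_sigmaD (k : ℕ) : PolyGrowth fun n => (sigmaD k (n + 1) : ℂ) := by
  refine ⟨k + 1, fun n => ?_⟩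
  rw [Complex.norm_natCast]
  have h : sigmaD k (n + 1) = ArithmeticFunction.sigma k (n + 1) := by
    rw [ArithmeticFunction.sigma_apply]; rfl
  have := ArithmeticFunction.sigma_le_pow_succ k (n + 1)
  rw [h]
  exact_mod_cast this

lemma Eis2_eq (τ : ℂ) : Eis2 τ = 1 - 24 * qser (fun n => (sigmaD 1 (n + 1) : ℂ)) τ := rfl
lemma Eis4_eq (τ : ℂ) : Eis4 τ = 1 + 240 * qser (fun n => (sigmaD 3 (n + 1) : ℂ)) τ := rfl
lemma Eis6_eq (τ : ℂ) : Eis6 τ = 1 - 504 * qser (fun n => (sigmaD 5 (n + 1) : ℂ)) τ := rfl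

/-- The derivative `q d/dq E₂`, as a `q`-series. -/
def dEis2 (τ : ℂ) : ℂ := -24 * qser (fun n => ((n : ℂ) + 1) * (sigmaD 1 (n + 1) : ℂ)) τ

/-- The derivative `q d/dq E₄`, as a `q`-series. -/
def dEis4 (τ : ℂ) : ℂ := 240 * qser (fun n => ((n : ℂ) + 1) * (sigmaD 3 (n + 1) : ℂ)) τ

lemma hd_Eis2 {τ : ℂ} (hτ : 0 < τ.im) : HD Eis2 (dEis2 τ) τ :=
  ((HD.const 1 τ).sub ((hd_qser (polyGrowth_sigmaD 1) hτ).cmul 24)).congr_val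
    (by rw [dEis2]; ring)

lemma hd_Eis4 {τ : ℂ} (hτ : 0 < τ.im) : HD Eis4 (dEis4 τ) τ :=
  ((HD.const 1 τ).add ((hd_qser (polyGrowth_sigmaD 3) hτ).cmul 240)).congr_val
    (by rw [dEis4]; ring)

lemma differentiableAt_dEis2 {τ : ℂ} (hτ : 0 < τ.im) : DifferentiableAt ℂ dEis2 τ :=
  ((hd_qser (polyGrowth_sigmaD 1).succ_mul hτ).cmul (-24)).differentiableAt

lemma differentiableAt_dEis4 {τ : ℂ} (hτ : 0 < τ.im) : DifferentiableAt ℂ dEis4 τ :=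
  ((hd_qser (polyGrowth_sigmaD 3).succ_mul hτ).cmul 240).differentiableAt

lemma tendsto_Eis2 : Tendsto Eis2 imInf (𝓝 1) := by
  simpa using! ((tendsto_qser (polyGrowth_sigmaD 1)).const_mul 24).const_sub 1
lemma tendsto_Eis4 : Tendsto Eis4 imInf (𝓝 1) := by
  simpa using! ((tendsto_qser (polyGrowth_sigmaD 3)).const_mul 240).const_add 1
lemma tendsto_Eis6 : Tendsto Eis6 imInf (𝓝 1) := by
  simpa using! ((tendsto_qser (polyGrowth_sigmaD 5)).const_mul 504).const_sub 1
lemma tendsto_dEis2 : Tendsto dEis2 imInf (𝓝 0) := by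
  have := (tendsto_qser (polyGrowth_sigmaD 1).succ_mul).const_mul (-24)
  rwa [mul_zero] at this
lemma tendsto_dEis4 : Tendsto dEis4 imInf (𝓝 0) := by
  simpa using! (tendsto_qser (polyGrowth_sigmaD 3).succ_mul).const_mul 240

/-! ### Modularity and Ramanujan's equations -/

open scoped MatrixGroups ModularForm in
/-- A holomorphic function on the upper half-plane that is invariant under `τ ↦ τ + 1`, transforms
with weight `k` under `τ ↦ -1/τ` and vanishes at `i∞` is a level one cusp form, because `S` and `T`
generate `SL₂(ℤ)`. -/
lemma exists_cuspForm {f : ℂ → ℂ} {k : ℤ} (hd : ∀ τ : ℂ, 0 < τ.im → DifferentiableAt ℂ f τ)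
    (hT : ∀ τ : ℂ, 0 < τ.im → f (τ + 1) = f τ)
    (hS : ∀ τ : ℂ, 0 < τ.im → f (-1 / τ) = τ ^ k * f τ)
    (h0 : Tendsto f imInf (𝓝 0)) :
    ∃ F : CuspForm 𝒮ℒ k, ∀ τ : UpperHalfPlane, F τ = f τ := by
  have hS' : (fun τ : UpperHalfPlane => f τ) ∣[k] ModularGroup.S = fun τ : UpperHalfPlane => f τ := by
    ext z
    have hz : (z : ℂ) ≠ 0 := z.ne_zero
    rw [ModularForm.SL_slash_apply, UpperHalfPlane.modular_S_smul]
    have h1 := hS z z.2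
    have h2 : UpperHalfPlane.denom (ModularGroup.S : GL (Fin 2) ℝ) z = z := by
      exact ModularGroup.denom_S z
    rw [h2]
    have h3 : f ((-(z : ℂ))⁻¹) = z ^ k * f z := by
      rw [← h1]; congr 1; rw [inv_neg, neg_div, one_div]
    change f ((-(z : ℂ))⁻¹) * _ = _
    rw [h3, zpow_neg]
    field_simp
  have hT' : (fun τ : UpperHalfPlane => f τ) ∣[k] ModularGroup.T = fun τ : UpperHalfPlane => f τ := by
    ext z
    rw [ModularForm.SL_slash_apply, UpperHalfPlane.modular_T_smul]
    have h2 : UpperHalfPlane.denom (ModularGroup.T : GL (Fin 2) ℝ) z = 1 := by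
      have := ModularGroup.denom_apply ModularGroup.T z
      rw [this]
      simp [ModularGroup.T]
    rw [h2, one_zpow, mul_one]
    have h1 := hT z z.2
    rw [← h1]
    congr 1
    rw [UpperHalfPlane.coe_vadd, add_comm]; simp
  have hA := SlashInvariantForm.slash_action_generators_SL2Z hS' hT'
  refine ⟨{ toFun := fun τ => f τ, slash_action_eq' := ?_, holo' := ?_, zero_at_cusps' := ?_},
    fun τ => rfl⟩
  · rintro A ⟨A, rfl⟩
    exact hA A
  · rw [UpperHalfPlane.mdifferentiable_iff]
    refine .congr (fun z hz => (hd z hz).differentiableWithinAt) fun z hz => ?_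
    simp [UpperHalfPlane.ofComplex_apply_of_im_pos hz]
  · intro c hc
    rw [Subgroup.IsArithmetic.isCusp_iff_isCusp_SL2Z] at hc
    rw [OnePoint.isZeroAt_iff_forall_SL2Z hc]
    intro γ _
    change UpperHalfPlane.IsZeroAtImInfty ((fun τ : UpperHalfPlane => f τ) ∣[k] γ)
    rw [hA γ]
    refine h0.comp ?_
    rw [tendsto_comap_iff]
    exact tendsto_comap

open scoped MatrixGroups ModularForm in
/-- There is no nonzero level one cusp form of weight less than twelve. -/
lemma eq_zero_of_modular {f : ℂ → ℂ} {k : ℤ} (hk : k < 12)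
    (hd : ∀ τ : ℂ, 0 < τ.im → DifferentiableAt ℂ f τ)
    (hT : ∀ τ : ℂ, 0 < τ.im → f (τ + 1) = f τ)
    (hS : ∀ τ : ℂ, 0 < τ.im → f (-1 / τ) = τ ^ k * f τ)
    (h0 : Tendsto f imInf (𝓝 0)) {τ : ℂ} (hτ : 0 < τ.im) : f τ = 0 := by
  obtain ⟨F, hF⟩ := exists_cuspForm hd hT hS h0
  have := rank_zero_iff.mp (CuspForm.rank_eq_zero_of_weight_lt_twelve hk)
  have h := hF ⟨τ, hτ⟩
  rw [Subsingleton.elim F 0] at h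
  exact h.symm

lemma im_neg_one_div {τ : ℂ} (hτ : 0 < τ.im) : 0 < (-1 / τ).im := by
  have := UpperHalfPlane.im_inv_neg_coe_pos ⟨τ, hτ⟩
  rw [show -1 / τ = (-τ)⁻¹ by rw [inv_neg, neg_div, one_div]]
  exact this

lemma ne_zero_of_im_pos {τ : ℂ} (hτ : 0 < τ.im) : τ ≠ 0 := by
  rintro rfl; simp at hτ

lemma qser_sigma (k : ℕ) (τ : UpperHalfPlane) :
    qser (fun n => (sigmaD k (n + 1) : ℂ)) τ =
      ∑' n : ℕ+, (ArithmeticFunction.sigma k n : ℂ) * Complex.exp (2 * π * I * τ) ^ (n : ℕ) := by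
  rw [tsum_pnat_eq_tsum_succ
    (f := fun n => (ArithmeticFunction.sigma k n : ℂ) * Complex.exp (2 * π * I * τ) ^ n)]
  refine tsum_congr fun n => ?_
  have h : sigmaD k (n + 1) = ArithmeticFunction.sigma k (n + 1) := by
    rw [ArithmeticFunction.sigma_apply]; rfl
  simp only [h]
  rw [← Complex.exp_nat_mul]
  congr 2
  push_cast; ring

lemma Eis2_coe (τ : UpperHalfPlane) : Eis2 τ = EisensteinSeries.E2 τ := by
  rw [EisensteinSeries.E2_eq_tsum_cexp, Eis2_eq, qser_sigma]

lemma Eis4_coe (τ : UpperHalfPlane) :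
    Eis4 τ = ModularForm.E (show 3 ≤ 4 by norm_num) τ := by
  rw [EisensteinSeries.q_expansion_bernoulli _ ⟨2, rfl⟩, Eis4_eq, qser_sigma,
    show bernoulli 4 = -1 / 30 by decide +kernel]
  norm_num

lemma Eis6_coe (τ : UpperHalfPlane) :
    Eis6 τ = ModularForm.E (show 3 ≤ 6 by norm_num) τ := by
  rw [EisensteinSeries.q_expansion_bernoulli _ ⟨3, rfl⟩, Eis6_eq, qser_sigma,
    show bernoulli 6 = 1 / 42 by decide +kernel]
  norm_num

lemma qser_add_one (a : ℕ → ℂ) (τ : ℂ) : qser a (τ + 1) = qser a τ := by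
  refine tsum_congr fun n => ?_
  congr 1
  rw [Complex.exp_eq_exp_iff_exists_int]
  exact ⟨n + 1, by push_cast; ring⟩

open scoped MatrixGroups ModularForm in
/-- Translation of a slash identity for `S` with error term `r` (nonzero for `E₂`) into a functional
equation on `ℂ`. -/
lemma S_of_slash {f : UpperHalfPlane → ℂ} {g : ℂ → ℂ} {k : ℤ} {r : ℂ → ℂ}
    (hf : ∀ τ : UpperHalfPlane, g τ = f τ)
    (h : ∀ τ : UpperHalfPlane, (f ∣[k] ModularGroup.S) τ = f τ + r τ) {τ : ℂ} (hτ : 0 < τ.im) :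
    g (-1 / τ) = τ ^ k * (g τ + r τ) := by
  have h1 := h ⟨τ, hτ⟩
  have h2 : UpperHalfPlane.denom (ModularGroup.S : GL (Fin 2) ℝ) (⟨τ, hτ⟩ : UpperHalfPlane) = τ := by
    exact ModularGroup.denom_S _
  rw [ModularForm.SL_slash_apply, UpperHalfPlane.modular_S_smul, h2, ← hf, ← hf] at h1
  have h3 := ne_zero_of_im_pos hτ
  have h4 : g ((-τ)⁻¹) * τ ^ (-k) = g τ + r τ := h1
  rw [show -1 / τ = (-τ)⁻¹ by rw [inv_neg, neg_div, one_div], ← h4, zpow_neg]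
  field_simp

lemma Eis2_S {τ : ℂ} (hτ : 0 < τ.im) :
    Eis2 (-1 / τ) = τ ^ 2 * (Eis2 τ + 6 / (π * I * τ)) := by
  have := S_of_slash (k := 2) (r := fun τ => 6 / (π * I * τ)) Eis2_coe ?_ hτ
  · exact_mod_cast this
  · intro z
    rw [EisensteinSeries.E2_slash_action]
    simp only [Pi.sub_apply, Pi.smul_apply, smul_eq_mul, EisensteinSeries.D2_S, riemannZeta_two]
    have := z.ne_zero
    have hpi : (π : ℂ) ≠ 0 := by exact_mod_cast Real.pi_ne_zero
    field_simp
    linear_combination (-6) * I_sq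

open scoped MatrixGroups ModularForm in
lemma modForm_S {k : ℤ} (F : ModularForm 𝒮ℒ k) {g : ℂ → ℂ}
    (hF : ∀ τ : UpperHalfPlane, g τ = F τ) {τ : ℂ} (hτ : 0 < τ.im) :
    g (-1 / τ) = τ ^ k * g τ := by
  have := S_of_slash (k := k) (r := fun τ => 0) hF ?_ hτ
  · simpa using this
  · intro z
    rw [add_zero]
    exact congrFun (SlashInvariantFormClass.slash_action_eq F _ ⟨ModularGroup.S, rfl⟩) z

lemma Eis4_S {τ : ℂ} (hτ : 0 < τ.im) : Eis4 (-1 / τ) = τ ^ 4 * Eis4 τ := by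
  exact_mod_cast modForm_S _ Eis4_coe hτ

lemma Eis6_S {τ : ℂ} (hτ : 0 < τ.im) : Eis6 (-1 / τ) = τ ^ 6 * Eis6 τ := by
  exact_mod_cast modForm_S _ Eis6_coe hτ

lemma HD.comp_S {f : ℂ → ℂ} {a τ : ℂ} (hτ : 0 < τ.im) (hf : HD f a (-1 / τ)) :
    HD (fun t => f (-1 / t)) (a / τ ^ 2) τ := by
  have h0 := ne_zero_of_im_pos hτ
  have h1 : HasDerivAt (fun t : ℂ => -1 / t) (1 / τ ^ 2) τ := by
    have := (hasDerivAt_inv h0).const_mul (-1)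
    exact (this.congr_deriv (by ring)).congr_of_eventuallyEq
      (Eventually.of_forall fun t => by simp [div_eq_mul_inv])
  have := HasDerivAt.comp τ hf h1
  exact this.congr_deriv (by ring)

lemma hd_id (τ : ℂ) : HD (fun t => t) (1 / (2 * π * I)) τ := by
  refine (hasDerivAt_id τ).congr_deriv ?_
  field_simp [Complex.two_pi_I_ne_zero]

lemma dEis2_S {τ : ℂ} (hτ : 0 < τ.im) :
    dEis2 (-1 / τ) = τ ^ 4 * dEis2 τ + 1 / (π * I) * τ ^ 3 * Eis2 τ + 3 / (π * I) ^ 2 * τ ^ 2 := by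
  have h1 := (hd_Eis2 (im_neg_one_div hτ)).comp_S hτ
  have h0 := ne_zero_of_im_pos hτ
  have hpi : (π : ℂ) ≠ 0 := by exact_mod_cast Real.pi_ne_zero
  have h2 := (((hd_id τ).pow 2).mul (hd_Eis2 hτ)).add ((hd_id τ).cmul (6 / (π * I)))
  have h3 : (fun t => Eis2 (-1 / t)) =ᶠ[𝓝 τ] fun t => t ^ 2 * Eis2 t + 6 / (π * I) * t := by
    filter_upwards [eventually_im_pos hτ] with t ht
    have := ne_zero_of_im_pos ht
    rw [Eis2_S ht]; field_simp
  have h4 := h1.unique (h2.congr h3)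
  rw [div_eq_iff (by positivity)] at h4
  rw [h4]
  have hI := I_ne_zero
  field_simp
  norm_num; ring

lemma dEis4_S {τ : ℂ} (hτ : 0 < τ.im) :
    dEis4 (-1 / τ) = τ ^ 6 * dEis4 τ + 2 / (π * I) * τ ^ 5 * Eis4 τ := by
  have h1 := (hd_Eis4 (im_neg_one_div hτ)).comp_S hτ
  have h0 := ne_zero_of_im_pos hτ
  have hpi : (π : ℂ) ≠ 0 := by exact_mod_cast Real.pi_ne_zero
  have h2 := ((hd_id τ).pow 4).mul (hd_Eis4 hτ)
  have h3 : (fun t => Eis4 (-1 / t)) =ᶠ[𝓝 τ] fun t => t ^ 4 * Eis4 t := by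
    filter_upwards [eventually_im_pos hτ] with t ht
    rw [Eis4_S ht]
  have h4 := h1.unique (h2.congr h3)
  rw [div_eq_iff (by positivity)] at h4
  rw [h4]
  have hI := I_ne_zero
  field_simp
  norm_num; ring

lemma differentiableAt_Eis6 {τ : ℂ} (hτ : 0 < τ.im) : DifferentiableAt ℂ Eis6 τ :=
  ((HD.const 1 τ).sub ((hd_qser (polyGrowth_sigmaD 5) hτ).cmul 504)).differentiableAt

/-- Ramanujan's equation for `E₂`: the difference of both sides is a cusp form of weight 4. -/
lemma ramanujan2 {τ : ℂ} (hτ : 0 < τ.im) : dEis2 τ = (Eis2 τ ^ 2 - Eis4 τ) / 12 := by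
  have := eq_zero_of_modular (f := fun τ => Eis2 τ ^ 2 - 12 * dEis2 τ - Eis4 τ) (k := 4)
    (by norm_num) ?_ ?_ ?_ ?_ hτ
  · linear_combination (-1 / 12) * this
  · intro t ht
    exact (((hd_Eis2 ht).differentiableAt.pow 2).sub
      ((differentiableAt_dEis2 ht).const_mul 12)).sub (hd_Eis4 ht).differentiableAt
  · intro t ht
    simp only [Eis2_eq, Eis4_eq, dEis2, qser_add_one]
  · intro t ht
    have h0 := ne_zero_of_im_pos ht
    have hpi : (π : ℂ) ≠ 0 := by exact_mod_cast Real.pi_ne_zero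
    have hI := I_ne_zero
    simp only [Eis2_S ht, dEis2_S ht, Eis4_S ht]
    norm_cast
    field_simp
    ring
  · simpa using ((tendsto_Eis2.pow 2).sub (tendsto_dEis2.const_mul 12)).sub tendsto_Eis4

/-- Ramanujan's equation for `E₄`: the difference of both sides is a cusp form of weight 6. -/
lemma ramanujan4 {τ : ℂ} (hτ : 0 < τ.im) : dEis4 τ = (Eis2 τ * Eis4 τ - Eis6 τ) / 3 := by
  have := eq_zero_of_modular (f := fun τ => Eis2 τ * Eis4 τ - 3 * dEis4 τ - Eis6 τ) (k := 6)
    (by norm_num) ?_ ?_ ?_ ?_ hτ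
  · linear_combination (-1 / 3) * this
  · intro t ht
    exact (((hd_Eis2 ht).differentiableAt.mul (hd_Eis4 ht).differentiableAt).sub
      ((differentiableAt_dEis4 ht).const_mul 3)).sub (differentiableAt_Eis6 ht)
  · intro t ht
    simp only [Eis2_eq, Eis4_eq, Eis6_eq, dEis4, qser_add_one]
  · intro t ht
    have h0 := ne_zero_of_im_pos ht
    have hpi : (π : ℂ) ≠ 0 := by exact_mod_cast Real.pi_ne_zero
    have hI := I_ne_zero
    simp only [Eis2_S ht, dEis4_S ht, Eis4_S ht, Eis6_S ht]
    norm_cast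
    field_simp
    ring
  · simpa using ((tendsto_Eis2.mul tendsto_Eis4).sub (tendsto_dEis4.const_mul 3)).sub tendsto_Eis6

/-! ### Theta series with characteristics -/

/-- The summand `(n+s)^k e^{πiτ(n+s)² + 2πiu(n+s)}` of a theta series with characteristic `s`,
differentiated `k` times in `u`. -/
def thTerm (k : ℕ) (s : ℝ) (τ u : ℂ) (n : ℤ) : ℂ :=
  ((n : ℂ) + s) ^ k * Complex.exp (π * I * τ * (n + s) ^ 2 + 2 * π * I * u * (n + s))

/-- The theta series `∑_n e^{πiτ(n+s)² + 2πiu(n+s)}` with characteristic `s`, differentiated `k`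
times by `(1/2πi) ∂/∂u`. -/
def Tt (k : ℕ) (s : ℝ) (τ u : ℂ) : ℂ := ∑' n : ℤ, thTerm k s τ u n

/-- A summable majorant of `thTerm k s τ u`, uniform for `τ` in a horizontal strip bounded below by
`T` and for `|Im u| ≤ R`. -/
def thBound (k : ℕ) (s T S R : ℝ) (n : ℤ) : ℝ :=
  Real.exp (2 * π * |s| * R) * ((|(n : ℝ)| + |s|) ^ k *
    Real.exp (-π * (T * n ^ 2 - 2 * S * |(n : ℝ)|)))

lemma summable_thBound (k : ℕ) (s S R : ℝ) {T : ℝ} (hT : 0 < T) :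
    Summable (thBound k s T S R) := by
  refine Summable.mul_left _ ?_
  have h1 := summable_pow_mul_jacobiTheta₂_term_bound S hT k
  have h2 := (summable_pow_mul_jacobiTheta₂_term_bound S hT 0).mul_left (|s| ^ k)
  have h3 := (h1.add h2).mul_left (2 ^ (k - 1))
  refine Summable.of_nonneg_of_le (fun n => by positivity) (fun n => ?_) h3
  have := add_pow_le (abs_nonneg (n : ℝ)) (abs_nonneg s) k
  have h4 : ((|n| : ℤ) : ℝ) = |(n : ℝ)| := by push_cast; rfl
  simp only [h4, pow_zero, one_mul]
  calc _ ≤ (2 ^ (k - 1) * (|(n : ℝ)| ^ k + |s| ^ k)) *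
        Real.exp (-π * (T * n ^ 2 - 2 * S * |(n : ℝ)|)) := by gcongr
    _ = _ := by ring

lemma norm_thTerm_le (k : ℕ) (s : ℝ) {T T' R : ℝ} (hT : 0 < T) {τ u : ℂ} (h1 : T ≤ τ.im)
    (h2 : τ.im ≤ T') (h3 : |u.im| ≤ R) (n : ℤ) :
    ‖thTerm k s τ u n‖ ≤ thBound k s T (R + |s| * T') R n := by
  have e1 : thTerm k s τ u n = Complex.exp (π * I * τ * s ^ 2 + 2 * π * I * u * s) *
      (((n : ℂ) + s) ^ k * jacobiTheta₂_term n (u + s * τ) τ) := by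
    rw [thTerm, jacobiTheta₂_term, mul_left_comm, ← Complex.exp_add]
    congr 2; ring
  rw [e1, norm_mul, norm_mul, norm_pow]
  unfold thBound
  gcongr
  · rw [Complex.norm_exp, Real.exp_le_exp]
    have : (π * I * τ * s ^ 2 + 2 * π * I * u * s : ℂ).re
        = -(π * s ^ 2 * τ.im) - 2 * π * (s * u.im) := by
      have : (π * I * τ * s ^ 2 + 2 * π * I * u * s : ℂ)
        = ((π * s ^ 2 : ℝ) : ℂ) * (I * τ) + ((2 * π * s : ℝ) : ℂ) * (I * u) := by
        push_cast; ring
      rw [this, Complex.add_re, Complex.re_ofReal_mul, Complex.re_ofReal_mul]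
      simp; ring
    rw [this]
    have h4 : 0 ≤ π * s ^ 2 * τ.im := by
      have : 0 < τ.im := by linarith
      positivity
    have h5 : -(s * u.im) ≤ |s| * R := by
      refine (neg_le_abs _).trans ?_
      rw [abs_mul]; gcongr
    have h6 : 2 * π * (-(s * u.im)) ≤ 2 * π * (|s| * R) := by gcongr
    linarith
  · refine (norm_add_le _ _).trans ?_
    simp
  · have := norm_jacobiTheta₂_term_le hT (S := R + |s| * T') (z := u + s * τ) ?_ h1 n
    · push_cast at this; exact this
    rw [Complex.add_im, Complex.im_ofReal_mul]
    refine (abs_add_le _ _).trans ?_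
    rw [abs_mul]
    have : |τ.im| ≤ T' := by rw [abs_of_pos (by linarith)]; exact h2
    gcongr

lemma summable_thTerm_norm (k : ℕ) (s : ℝ) {τ : ℂ} (hτ : 0 < τ.im) (u : ℂ) :
    Summable fun n => ‖thTerm k s τ u n‖ :=
  Summable.of_nonneg_of_le (fun _ => norm_nonneg _)
    (fun n => norm_thTerm_le k s hτ le_rfl le_rfl le_rfl n)
    (summable_thBound k s _ _ hτ)

lemma summable_thTerm (k : ℕ) (s : ℝ) {τ : ℂ} (hτ : 0 < τ.im) (u : ℂ) :
    Summable (thTerm k s τ u) := (summable_thTerm_norm k s hτ u).of_norm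

lemma norm_two_pi_I : ‖(2 * π * I : ℂ)‖ = 2 * π := by
  simp [abs_of_pos Real.pi_pos]

lemma hd_Tt_u (k : ℕ) (s : ℝ) {τ : ℂ} (hτ : 0 < τ.im) (u : ℂ) :
    HD (fun v => Tt k s τ v) (Tt (k + 1) s τ u) u := by
  have key := hasDerivAt_tsum_of_isPreconnected
    (g := fun (n : ℤ) (v : ℂ) => thTerm k s τ v n)
    (g' := fun (n : ℤ) (v : ℂ) => 2 * π * I * thTerm (k + 1) s τ v n)
    (t := {v : ℂ | -(|u.im| + 1) < v.im} ∩ {v : ℂ | v.im < |u.im| + 1}) (y₀ := u) (y := u)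
    ((summable_thBound (k + 1) s (|u.im| + 1 + |s| * τ.im) (|u.im| + 1) hτ).mul_left (2 * π))
    ((isOpen_lt continuous_const Complex.continuous_im).inter
      (isOpen_lt Complex.continuous_im continuous_const))
    ((convex_halfSpace_im_gt _).inter (convex_halfSpace_im_lt _)).isPreconnected
    ?_ ?_ ?_ (summable_thTerm k s hτ u) ?_
  · unfold HD
    rw [tsum_mul_left] at key
    exact key
  · intro n v _
    have h1 : HasDerivAt (fun v : ℂ => π * I * τ * ((n : ℂ) + s) ^ 2 + 2 * π * I * v * (n + s))
        (2 * π * I * (n + s)) v := by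
      have := (((hasDerivAt_id v).const_mul (2 * π * I)).mul_const ((n : ℂ) + s)).const_add
        (π * I * τ * ((n : ℂ) + s) ^ 2)
      simpa using this
    exact (h1.cexp.const_mul (((n : ℂ) + s) ^ k)).congr_deriv (by rw [thTerm]; ring)
  · intro n v hv
    rw [norm_mul, norm_two_pi_I]
    gcongr
    exact norm_thTerm_le (k + 1) s hτ le_rfl le_rfl (abs_le.mpr ⟨hv.1.le, hv.2.le⟩) n
  all_goals
    constructor
    · simp only [Set.mem_ofPred_eq]; linarith [neg_abs_le u.im]
    · simp only [Set.mem_ofPred_eq]; linarith [le_abs_self u.im]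

/-- The heat equation for theta series: the `τ`-derivative is half the second `u`-derivative. -/
lemma hd_Tt_tau (k : ℕ) (s : ℝ) {τ : ℂ} (hτ : 0 < τ.im) (u : ℂ) :
    HD (fun t => Tt k s t u) (1 / 2 * Tt (k + 2) s τ u) τ := by
  have hT : 0 < τ.im / 2 := by positivity
  have key := hasDerivAt_tsum_of_isPreconnected
    (g := fun (n : ℤ) (t : ℂ) => thTerm k s t u n)
    (g' := fun (n : ℤ) (t : ℂ) => π * I * thTerm (k + 2) s t u n)
    (t := {t : ℂ | τ.im / 2 < t.im} ∩ {t : ℂ | t.im < τ.im + 1}) (y₀ := τ) (y := τ)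
    ((summable_thBound (k + 2) s (|u.im| + |s| * (τ.im + 1)) |u.im| hT).mul_left π)
    ((isOpen_lt continuous_const Complex.continuous_im).inter
      (isOpen_lt Complex.continuous_im continuous_const))
    ((convex_halfSpace_im_gt _).inter (convex_halfSpace_im_lt _)).isPreconnected
    ?_ ?_ ?_ (summable_thTerm k s hτ u) ?_
  · unfold HD
    rw [tsum_mul_left] at key
    exact key.congr_deriv (by rw [Tt]; ring)
  · intro n v _
    have h1 : HasDerivAt (fun t : ℂ => π * I * t * ((n : ℂ) + s) ^ 2 + 2 * π * I * u * (n + s))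
        (π * I * (n + s) ^ 2) v := by
      have := (((hasDerivAt_id v).const_mul (π * I)).mul_const (((n : ℂ) + s) ^ 2)).add_const
        (2 * π * I * u * (n + s))
      simpa using this
    exact (h1.cexp.const_mul (((n : ℂ) + s) ^ k)).congr_deriv (by rw [thTerm]; ring)
  · intro n v hv
    rw [norm_mul]
    have : ‖(π * I : ℂ)‖ = π := by simp [abs_of_pos Real.pi_pos]
    rw [this]
    gcongr
    exact norm_thTerm_le (k + 2) s hT hv.1.le hv.2.le le_rfl n
  all_goals
    constructor
    · simp only [Set.mem_ofPred_eq]; linarith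
    · simp only [Set.mem_ofPred_eq]; linarith

lemma thTerm_add_one (k : ℕ) (s : ℝ) (τ u : ℂ) (n : ℤ) :
    thTerm k s τ (u + 1) n = Complex.exp (2 * π * I * s) * thTerm k s τ u n := by
  rw [thTerm, thTerm, mul_left_comm, ← Complex.exp_add]
  congr 1
  rw [Complex.exp_eq_exp_iff_exists_int]
  exact ⟨n, by ring⟩

lemma Tt_add_one (k : ℕ) (s : ℝ) (τ u : ℂ) :
    Tt k s τ (u + 1) = Complex.exp (2 * π * I * s) * Tt k s τ u := by
  simp only [Tt, thTerm_add_one, tsum_mul_left]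

/-- The `k`-th normalised `z`-derivative of `ϑ`, written through the theta series of characteristic
`1/2` at the shifted point `z + 1/2`. -/
def Th (k : ℕ) (τ z : ℂ) : ℂ := -I * Tt k (1 / 2) τ (z + 1 / 2)

lemma thetaJ_eq (τ z : ℂ) : thetaJ τ z = Th 0 τ z := by
  rw [thetaJ, Th, Tt, ← tsum_mul_left, ← tsum_mul_left]
  refine tsum_congr fun n => ?_
  rw [thTerm, pow_zero, one_mul]
  have h1 : (-1 : ℂ) ^ n = Complex.exp (n * (π * I)) := by
    rw [Complex.exp_int_mul, Complex.exp_pi_mul_I]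
  have h2 : -I = Complex.exp (-(π / 2 * I)) := by
    rw [Complex.exp_neg, Complex.exp_pi_div_two_mul_I, Complex.inv_I]
  rw [h1, h2]
  simp only [← Complex.exp_add]
  congr 1
  push_cast
  ring

lemma hd_Th_z (k : ℕ) {τ : ℂ} (hτ : 0 < τ.im) (z : ℂ) :
    HD (fun w => Th k τ w) (Th (k + 1) τ z) z := by
  have h := hd_Tt_u k (1 / 2) hτ (z + 1 / 2)
  have h2 : HD (fun w => Tt k (1 / 2) τ (w + 1 / 2)) (Tt (k + 1) (1 / 2) τ (z + 1 / 2)) z :=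
    HasDerivAt.comp_add_const z (1 / 2) h
  exact h2.cmul (-I)

lemma hd_Th_tau (k : ℕ) {τ : ℂ} (hτ : 0 < τ.im) (z : ℂ) :
    HD (fun t => Th k t z) (1 / 2 * Th (k + 2) τ z) τ :=
  ((hd_Tt_tau k (1 / 2) hτ (z + 1 / 2)).cmul (-I)).congr_val (by rw [Th]; ring)

/-- The even derivatives of `ϑ` vanish at its zero `z = 0`, because the reflection `n ↦ -1 - n`
changes the sign of every summand. -/
lemma Tt_half_even {k : ℕ} (hk : Even k) (τ : ℂ) : Tt k (1 / 2) τ (1 / 2) = 0 := by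
  have h : Tt k (1 / 2) τ (1 / 2) = -Tt k (1 / 2) τ (1 / 2) := by
    conv_lhs => rw [Tt, ← (Equiv.subLeft (-1 : ℤ)).tsum_eq]
    rw [Tt, ← tsum_neg]
    refine tsum_congr fun n => ?_
    rw [thTerm, thTerm]
    simp only [Equiv.subLeft_apply]
    push_cast
    have e1 : (-1 - (n : ℂ) + 1 / 2) = -(n + 1 / 2) := by ring
    rw [e1, hk.neg_pow, ← mul_neg]
    congr 1
    have e2 : (-1 : ℂ) = Complex.exp (π * I) := Complex.exp_pi_mul_I.symm
    rw [neg_eq_neg_one_mul (Complex.exp _), e2, ← Complex.exp_add, Complex.exp_eq_exp_iff_exists_int]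
    exact ⟨-1 - n, by push_cast; ring⟩
  linear_combination (1 / 2) * h

/-! ### Products of two theta functions -/

lemma hasSum_thTerm_mul (k l : ℕ) (s r : ℝ) {τ σ : ℂ} (hτ : 0 < τ.im) (hσ : 0 < σ.im) (u v : ℂ) :
    HasSum (fun x : ℤ × ℤ => thTerm k s τ u x.1 * thTerm l r σ v x.2)
      (Tt k s τ u * Tt l r σ v) :=
  (summable_thTerm k s hτ u).hasSum.mul (summable_thTerm l r hσ v).hasSum
    (summable_mul_of_summable_norm (summable_thTerm_norm k s hτ u) (summable_thTerm_norm l r hσ v))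

/-- The summand of a double theta series over `(n, m)`: the product of two terms of characteristic
`1/2`, weighted by powers of the difference `n - m` and of the sum `n + m + 1` of the two
exponents. -/
def prTerm (i j : ℕ) (τ u : ℂ) (x : ℤ × ℤ) : ℂ :=
  ((x.1 : ℂ) - x.2) ^ i * ((x.1 : ℂ) + x.2 + 1) ^ j *
    (thTerm 0 (1 / 2) τ u x.1 * thTerm 0 (1 / 2) τ u x.2)

/-- The value of the double series `∑ prTerm i j τ u`, expressed by theta series at `2τ`: splitting
by the parity of `n - m` decouples the sum and the difference of the exponents. -/
def prVal (i j : ℕ) (τ u : ℂ) : ℂ :=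
  2 ^ (i + j) * (Tt j (1 / 2) (2 * τ) (2 * u) * Tt i 0 (2 * τ) 0 +
    Tt j 0 (2 * τ) (2 * u) * Tt i (1 / 2) (2 * τ) 0)

/-- Parametrisation of the pairs `(n, m)` with `n - m` even. -/
def evMap (x : ℤ × ℤ) : ℤ × ℤ := (x.1 + x.2, x.1 - x.2)

/-- Parametrisation of the pairs `(n, m)` with `n - m` odd. -/
def odMap (x : ℤ × ℤ) : ℤ × ℤ := (x.1 + x.2, x.1 - x.2 - 1)

lemma evMap_injective : Function.Injective evMap := by
  rintro ⟨a, b⟩ ⟨c, d⟩ h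
  simp only [evMap, Prod.mk.injEq] at h ⊢
  omega

lemma odMap_injective : Function.Injective odMap := by
  rintro ⟨a, b⟩ ⟨c, d⟩ h
  simp only [odMap, Prod.mk.injEq] at h ⊢
  omega

lemma isCompl_ranges : IsCompl (Set.range evMap) (Set.range odMap) := by
  constructor
  · rw [Set.disjoint_left]
    rintro x ⟨⟨a, b⟩, rfl⟩ ⟨⟨c, d⟩, h⟩
    simp only [evMap, odMap, Prod.mk.injEq] at h
    omega
  · rw [codisjoint_iff]
    refine Set.eq_univ_iff_forall.mpr ?_
    rintro ⟨n, m⟩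
    rcases Int.even_or_odd (n - m) with ⟨b, hb⟩ | ⟨b, hb⟩
    · left
      exact ⟨(n - b, b), by simp only [evMap, Prod.mk.injEq]; omega⟩
    · right
      exact ⟨(n - b, b), by simp only [odMap, Prod.mk.injEq]; omega⟩

lemma im_two_mul {τ : ℂ} (hτ : 0 < τ.im) : 0 < (2 * τ).im := by
  simpa using hτ

lemma hasSum_prTerm (i j : ℕ) {τ : ℂ} (hτ : 0 < τ.im) (u : ℂ) :
    HasSum (prTerm i j τ u) (prVal i j τ u) := by
  have h2 := im_two_mul hτ
  rw [prVal, mul_add]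
  refine HasSum.add_isCompl isCompl_ranges ?_ ?_
  · refine evMap_injective.hasSum_range_iff.mpr ?_
    refine ((hasSum_thTerm_mul j i (1 / 2) 0 h2 h2 (2 * u) 0).mul_left (2 ^ (i + j))).congr_fun ?_
    rintro ⟨a, b⟩
    simp only [Function.comp, evMap, prTerm, thTerm, pow_zero, one_mul]
    rw [← Complex.exp_add, mul_mul_mul_comm, ← Complex.exp_add]
    push_cast
    rw [show ((a : ℂ) + b - (a - b)) = 2 * (b + 0) by ring,
      show ((a : ℂ) + b + (a - b) + 1) = 2 * (a + 1 / 2) by ring, mul_pow, mul_pow, pow_add,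
      mul_mul_mul_comm, mul_assoc, mul_comm (((b : ℂ) + 0) ^ i)]
    congr 3
    ring
  · refine odMap_injective.hasSum_range_iff.mpr ?_
    refine ((hasSum_thTerm_mul j i 0 (1 / 2) h2 h2 (2 * u) 0).mul_left (2 ^ (i + j))).congr_fun ?_
    rintro ⟨a, b⟩
    simp only [Function.comp, odMap, prTerm, thTerm, pow_zero, one_mul]
    rw [← Complex.exp_add, mul_mul_mul_comm, ← Complex.exp_add]
    push_cast
    rw [show ((a : ℂ) + b - (a - b - 1)) = 2 * (b + 1 / 2) by ring,
      show ((a : ℂ) + b + (a - b - 1) + 1) = 2 * (a + 0) by ring, mul_pow, mul_pow, pow_add,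
      mul_mul_mul_comm, mul_assoc, mul_comm (((b : ℂ) + 1 / 2) ^ i)]
    congr 3
    ring

lemma thTerm_eq (k : ℕ) (s : ℝ) (τ u : ℂ) (n : ℤ) :
    thTerm k s τ u n = ((n : ℂ) + s) ^ k * thTerm 0 s τ u n := by
  simp [thTerm]

lemma prVal_eq {i j : ℕ} {τ : ℂ} (hτ : 0 < τ.im) (u : ℂ) {f : ℤ × ℤ → ℂ} {a : ℂ}
    (h : HasSum f a) (hf : ∀ x, prTerm i j τ u x = f x) : prVal i j τ u = a := by
  have h' := hasSum_prTerm i j hτ u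
  rw [show prTerm i j τ u = f from funext hf] at h'
  exact h'.unique h

/-- Expanding the binomials in `prTerm` turns the double series into bilinear expressions in the
derivatives `ψ k` of the theta function of characteristic `1/2` (Hirota derivatives). -/
lemma prVal_expand {τ : ℂ} (hτ : 0 < τ.im) (u : ℂ) {ψ : ℕ → ℂ}
    (hψ : ∀ k, ψ k = Tt k (1 / 2) τ u) :
    prVal 0 0 τ u = ψ 0 ^ 2 ∧
    prVal 2 0 τ u = 2 * ψ 2 * ψ 0 - 2 * ψ 1 ^ 2 ∧
    prVal 4 0 τ u = 2 * ψ 4 * ψ 0 - 8 * ψ 3 * ψ 1 + 6 * ψ 2 ^ 2 ∧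
    prVal 0 2 τ u = 2 * ψ 2 * ψ 0 + 2 * ψ 1 ^ 2 ∧
    prVal 2 2 τ u = 2 * ψ 4 * ψ 0 - 2 * ψ 2 ^ 2 ∧
    prVal 4 2 τ u = 2 * ψ 6 * ψ 0 - 4 * ψ 5 * ψ 1 - 2 * ψ 4 * ψ 2 + 4 * ψ 3 ^ 2 := by
  have P : ∀ k l : ℕ, HasSum (fun x : ℤ × ℤ => ((x.1 : ℂ) + 1 / 2) ^ k * ((x.2 : ℂ) + 1 / 2) ^ l *
      (thTerm 0 (1 / 2) τ u x.1 * thTerm 0 (1 / 2) τ u x.2)) (ψ k * ψ l) := by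
    intro k l
    have := hasSum_thTerm_mul k l (1 / 2) (1 / 2) hτ hτ u u
    rw [hψ, hψ]
    refine this.congr_fun fun x => ?_
    rw [thTerm_eq k, thTerm_eq l]
    push_cast
    ring
  refine ⟨?_, ?_, ?_, ?_, ?_, ?_⟩
  · rw [prVal_eq hτ u (P 0 0) fun x => by rw [prTerm]; ring]; ring
  · rw [prVal_eq hτ u (((P 2 0).add (P 0 2)).sub ((P 1 1).mul_left 2))
      fun x => by rw [prTerm]; ring]
    ring
  · rw [prVal_eq hτ u ((((P 4 0).add (P 0 4)).sub (((P 3 1).add (P 1 3)).mul_left 4)).add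
      ((P 2 2).mul_left 6)) fun x => by rw [prTerm]; ring]
    ring
  · rw [prVal_eq hτ u (((P 2 0).add (P 0 2)).add ((P 1 1).mul_left 2))
      fun x => by rw [prTerm]; ring]
    ring
  · rw [prVal_eq hτ u (((P 4 0).add (P 0 4)).sub ((P 2 2).mul_left 2))
      fun x => by rw [prTerm]; ring]
    ring
  · rw [prVal_eq hτ u (((((P 6 0).add (P 0 6)).sub (((P 5 1).add (P 1 5)).mul_left 2)).sub
      ((P 4 2).add (P 2 4))).add ((P 3 3).mul_left 4)) fun x => by rw [prTerm]; ring]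
    ring

/-! ### The theta derivative at the origin -/

lemma thTerm_half (k : ℕ) (τ : ℂ) (n : ℤ) : thTerm k (1 / 2) τ (1 / 2) n =
    I * Complex.exp (π * I * τ / 4) *
      (((n : ℂ) + 1 / 2) ^ k * jacobiTheta₂_term n (1 / 2 + τ / 2) τ) := by
  rw [thTerm, jacobiTheta₂_term, mul_left_comm]
  push_cast
  congr 1
  rw [← Complex.exp_pi_div_two_mul_I, ← Complex.exp_add, ← Complex.exp_add,
    Complex.exp_pi_div_two_mul_I]
  congr 1
  ring

/-- The theta constant of odd characteristic is zero. -/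
lemma jacobi_half {τ : ℂ} : jacobiTheta₂ (1 / 2 + τ / 2) τ = 0 := by
  have h := Tt_half_even (k := 0) (by simp) τ
  rw [Tt] at h
  simp only [thTerm_half, pow_zero, one_mul, tsum_mul_left] at h
  rcases mul_eq_zero.mp h with h | h
  · simp at h
  · exact h

lemma Tt_one_half {τ : ℂ} (hτ : 0 < τ.im) : Tt 1 (1 / 2) τ (1 / 2) =
    Complex.exp (π * I * τ / 4) / (2 * π) * jacobiTheta₂' (1 / 2 + τ / 2) τ := by
  have h1 := ((hasSum_jacobiTheta₂'_term (1 / 2 + τ / 2) hτ).mul_left (1 / (2 * π * I))).add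
    ((hasSum_jacobiTheta₂_term (1 / 2 + τ / 2) hτ).mul_left (1 / 2))
  have hpi : (π : ℂ) ≠ 0 := by exact_mod_cast Real.pi_ne_zero
  have h2 := (h1.mul_left (I * Complex.exp (π * I * τ / 4))).tsum_eq
  rw [jacobi_half] at h2
  rw [Tt]
  calc _ = _ := tsum_congr fun n => ?_
    _ = _ := h2
    _ = _ := ?_
  · rw [thTerm_half, jacobiTheta₂'_term]; field_simp [I_ne_zero]
  · field_simp [I_ne_zero]; ring

/-- The eighth power of `ϑ'(0)` transforms like a modular form of weight 12; the eighth power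
absorbs the square root and the eighth root of unity in the theta transformation. -/
lemma Tt_one_S {τ : ℂ} (hτ : 0 < τ.im) :
    Tt 1 (1 / 2) (-1 / τ) (1 / 2) ^ 8 = τ ^ 12 * Tt 1 (1 / 2) τ (1 / 2) ^ 8 := by
  have h0 := ne_zero_of_im_pos hτ
  have hpi : (π : ℂ) ≠ 0 := by exact_mod_cast Real.pi_ne_zero
  have h1 := jacobiTheta₂'_functional_equation (1 / 2 + τ / 2) τ
  have e1 : (1 / 2 + τ / 2) / τ = -(1 / 2 + (-1 / τ) / 2) + 1 := by field_simp; ring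
  rw [e1, jacobiTheta₂'_add_left, jacobiTheta₂'_neg_left, jacobiTheta₂_add_left,
    jacobiTheta₂_neg_left, jacobi_half] at h1
  have e2 : Complex.exp (-π * I * (1 / 2 + τ / 2) ^ 2 / τ) =
      Complex.exp (π * I * (-1 / τ) / 4) * -I * (Complex.exp (π * I * τ / 4))⁻¹ := by
    have h2 : -I = Complex.exp (-(π / 2 * I)) := by
      rw [Complex.exp_neg, Complex.exp_pi_div_two_mul_I, Complex.inv_I]
    rw [h2, ← Complex.exp_neg, ← Complex.exp_add, ← Complex.exp_add]
    congr 1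
    field_simp; ring
  have e3 : ((-I * τ) ^ (1 / 2 : ℂ)) ^ 8 = τ ^ 4 := by
    rw [← Complex.cpow_nat_mul]
    rw [show ((8 : ℕ) : ℂ) * (1 / 2) = ((4 : ℕ) : ℂ) by norm_num, Complex.cpow_natCast, mul_pow,
      neg_pow, I_pow_four]
    norm_num
  have e4 : (-I * τ) ^ (1 / 2 : ℂ) ≠ 0 := by
    intro h
    rw [h] at e3
    have := pow_ne_zero 4 h0
    exact this (by simpa using e3.symm)
  have h3 : Tt 1 (1 / 2) τ (1 / 2) = I / (τ * (-I * τ) ^ (1 / 2 : ℂ)) *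
      Tt 1 (1 / 2) (-1 / τ) (1 / 2) := by
    rw [Tt_one_half hτ, Tt_one_half (im_neg_one_div hτ), h1, e2]
    have := Complex.exp_ne_zero (π * I * τ / 4)
    field_simp
    ring
  rw [h3, mul_pow, div_pow, mul_pow τ, e3, show I ^ 8 = (I ^ 4) ^ 2 by ring, I_pow_four]
  field_simp

lemma Tt_one_T (τ : ℂ) :
    Tt 1 (1 / 2) (τ + 1) (1 / 2) ^ 8 = Tt 1 (1 / 2) τ (1 / 2) ^ 8 := by
  have h : Tt 1 (1 / 2) (τ + 1) (1 / 2) = Complex.exp (π * I / 4) * Tt 1 (1 / 2) τ (1 / 2) := by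
    rw [Tt, Tt, ← tsum_mul_left]
    refine tsum_congr fun n => ?_
    rw [thTerm, thTerm, mul_left_comm, ← Complex.exp_add]
    congr 1
    rw [Complex.exp_eq_exp_iff_exists_int]
    obtain ⟨m, hm⟩ := Int.even_mul_succ_self n
    refine ⟨m, ?_⟩
    have hm' : (n : ℂ) * (n + 1) = m + m := by exact_mod_cast hm
    push_cast
    linear_combination (π * I) * hm'
  rw [h, mul_pow, ← Complex.exp_nat_mul,
    show ((8 : ℕ) : ℂ) * (π * I / 4) = 2 * π * I by push_cast; ring, Complex.exp_two_pi_mul_I,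
    one_mul]

/-- Leading term at `i∞`: after division by `q^{1/8}` only `n = 0` and `n = -1` survive, and each
contributes `i/2`. -/
lemma tendsto_Tt_one_aux : Tendsto
    (fun τ => ∑' n : ℤ, thTerm 1 (1 / 2) τ (1 / 2) n * Complex.exp (-(π * I * τ / 4)))
    imInf (𝓝 I) := by
  have him : Tendsto Complex.im imInf atTop := tendsto_comap
  have key : ∀ (τ : ℂ) (n : ℤ), ‖thTerm 1 (1 / 2) τ (1 / 2) n * Complex.exp (-(π * I * τ / 4))‖ =
      ‖(n : ℂ) + 1 / 2‖ * Real.exp (-(π * τ.im * (n * (n + 1)))) := by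
    intro τ n
    rw [thTerm, pow_one, mul_assoc, ← Complex.exp_add, norm_mul, Complex.norm_exp]
    congr 2
    · push_cast; ring
    · have : (π * I * τ * ((n : ℂ) + (1 / 2 : ℝ)) ^ 2 + 2 * π * I * (1 / 2) * (n + (1 / 2 : ℝ)) +
        -(π * I * τ / 4)) = ((π * (n * (n + 1)) : ℝ) : ℂ) * (I * τ) + ((π * (n + 1 / 2) : ℝ) : ℂ) * I := by
        push_cast; ring
      rw [this, Complex.add_re, Complex.re_ofReal_mul, Complex.re_ofReal_mul]
      simp; ring
  have hnn : ∀ n : ℤ, (0 : ℝ) ≤ n * (n + 1) := by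
    intro n
    have : 0 ≤ n * (n + 1) := by
      rcases le_or_gt 0 n with h | h
      · positivity
      · nlinarith
    exact_mod_cast this
  have hlim : (∑' n : ℤ, if n ∈ ({0, -1} : Finset ℤ) then I / 2 else 0) = I := by
    rw [tsum_eq_sum (s := {0, -1}) (by intro b hb; simp [hb])]
    simp
  refine Tendsto.mono_right ?_ (le_of_eq (congrArg 𝓝 hlim))
  refine tendsto_tsum_of_dominated_convergence
    (bound := fun n => ‖thTerm 1 (1 / 2) I (1 / 2) n * Complex.exp (-(π * I * I / 4))‖) ?_ ?_ ?_
  · simp_rw [norm_mul]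
    exact (summable_thTerm_norm 1 (1 / 2) (by simp) (1 / 2)).mul_right _
  · intro n
    split_ifs with h
    · refine tendsto_const_nhds.congr fun τ => ?_
      rw [thTerm_half, jacobiTheta₂_term]
      have hpi2 := Complex.exp_pi_mul_I
      have e : ∀ x : ℂ, I * Complex.exp (π * I * τ / 4) * x * Complex.exp (-(π * I * τ / 4))
          = I * x := by
        intro x
        have := Complex.exp_ne_zero (π * I * τ / 4)
        rw [Complex.exp_neg]; field_simp
      rw [e]
      simp only [Finset.mem_insert, Finset.mem_singleton] at h
      rcases h with rfl | rfl
      · simp; ring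
      · push_cast
        rw [show 2 * π * I * -1 * (1 / 2 + τ / 2) + π * I * (-1) ^ 2 * τ = -(π * I) by ring,
          Complex.exp_neg, hpi2]
        norm_num; ring
    · rw [tendsto_zero_iff_norm_tendsto_zero]
      simp_rw [key]
      rw [← mul_zero ‖(n : ℂ) + 1 / 2‖]
      refine Tendsto.const_mul _ (Real.tendsto_exp_atBot.comp ?_)
      have hpos : (0 : ℝ) < n * (n + 1) := by
        refine lt_of_le_of_ne (hnn n) fun h' => h ?_
        have h'' : n * (n + 1) = 0 := by exact_mod_cast h'.symm
        rcases mul_eq_zero.mp h'' with h3 | h3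
        · simp [h3]
        · simp; right; omega
      have h2 : Tendsto (fun t : ℂ => (π * (n * (n + 1))) * t.im) imInf atTop :=
        him.const_mul_atTop (by positivity)
      refine (tendsto_neg_atTop_atBot.comp h2).congr fun t => ?_
      simp only [Function.comp]; ring
  · filter_upwards [him.eventually_ge_atTop 1] with t ht n
    rw [key, key]
    gcongr
    · exact hnn n
    · simpa using ht

lemma tendsto_Tt_one_mul : Tendsto
    (fun τ => Tt 1 (1 / 2) τ (1 / 2) * Complex.exp (-(π * I * τ / 4))) imInf (𝓝 I) := by
  refine tendsto_Tt_one_aux.congr fun τ => ?_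
  rw [tsum_mul_right, Tt]

lemma tendsto_Tt_one : Tendsto (fun τ => Tt 1 (1 / 2) τ (1 / 2)) imInf (𝓝 0) := by
  have him : Tendsto Complex.im imInf atTop := tendsto_comap
  have h : Tendsto (fun τ => Complex.exp (π * I * τ / 4)) imInf (𝓝 0) := by
    rw [tendsto_zero_iff_norm_tendsto_zero]
    simp_rw [Complex.norm_exp]
    refine Real.tendsto_exp_atBot.comp ?_
    have h2 : Tendsto (fun t : ℂ => (π / 4) * t.im) imInf atTop :=
      him.const_mul_atTop (by positivity)
    refine (tendsto_neg_atTop_atBot.comp h2).congr fun t => ?_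
    have : π * I * t / 4 = ((π / 4 : ℝ) : ℂ) * (I * t) := by push_cast; ring
    rw [this, Complex.re_ofReal_mul]
    simp
  have h2 := tendsto_Tt_one_mul.mul h
  rw [mul_zero] at h2
  refine h2.congr fun τ => ?_
  rw [mul_assoc, ← Complex.exp_add, neg_add_cancel, Complex.exp_zero, mul_one]

lemma exists_Tt_one_ne : ∃ τ : ℂ, 0 < τ.im ∧ Tt 1 (1 / 2) τ (1 / 2) ≠ 0 := by
  have hseq : Tendsto (fun y : ℝ => (y : ℂ) * I) atTop imInf := by
    rw [tendsto_comap_iff]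
    refine tendsto_id.congr fun y => ?_
    simp
  have h := (tendsto_Tt_one_mul.comp hseq).eventually_ne I_ne_zero
  obtain ⟨y, h1, h2⟩ := (h.and (eventually_gt_atTop 0)).exists
  refine ⟨y * I, by simpa using h2, fun h3 => h1 ?_⟩
  simp only [Function.comp, h3, zero_mul]

/-- A weak form of Jacobi's derivative formula: `ϑ'(0)⁸` is a cusp form of weight 12, hence a nonzero
multiple of `η²⁴`. -/
lemma exists_Tt_one_eta : ∃ c : ℂ, c ≠ 0 ∧ ∀ τ : ℂ, 0 < τ.im →
    Tt 1 (1 / 2) τ (1 / 2) ^ 8 = c * ModularForm.eta τ ^ 24 := by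
  obtain ⟨F, hF⟩ := exists_cuspForm (f := fun τ => Tt 1 (1 / 2) τ (1 / 2) ^ 8) (k := 12)
    (fun τ hτ => (hd_Tt_tau 1 (1 / 2) hτ (1 / 2)).differentiableAt.pow 8)
    (fun τ _ => Tt_one_T τ) (fun τ hτ => by exact_mod_cast Tt_one_S hτ)
    (by simpa using tendsto_Tt_one.pow 8)
  obtain ⟨c, hc⟩ := CuspForm.exists_smul_discriminant_of_weight_eq_twelve F
  have h1 : ∀ τ : ℂ, 0 < τ.im → Tt 1 (1 / 2) τ (1 / 2) ^ 8 = c * ModularForm.eta τ ^ 24 := by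
    intro τ hτ
    have := hF ⟨τ, hτ⟩
    rw [← hc] at this
    exact this.symm
  refine ⟨c, ?_, h1⟩
  rintro rfl
  obtain ⟨τ, hτ, hne⟩ := exists_Tt_one_ne
  have := h1 τ hτ
  rw [zero_mul] at this
  exact hne (pow_eq_zero_iff (by norm_num) |>.mp this)

lemma Tt_one_ne_zero {τ : ℂ} (hτ : 0 < τ.im) : Tt 1 (1 / 2) τ (1 / 2) ≠ 0 := by
  obtain ⟨c, hc, h⟩ := exists_Tt_one_eta
  intro h0
  have := h τ hτ
  rw [h0, zero_pow (by norm_num)] at this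
  exact mul_ne_zero hc (pow_ne_zero 24 (ModularForm.eta_ne_zero hτ)) this.symm

lemma hd_eta {τ : ℂ} (hτ : 0 < τ.im) :
    HD ModularForm.eta (Eis2 τ / 24 * ModularForm.eta τ) τ := by
  have h1 := (ModularForm.differentiableAt_eta_of_mem_upperHalfPlaneSet hτ).hasDerivAt
  have h2 := ModularForm.logDeriv_eta_eq_E2 ⟨τ, hτ⟩
  rw [← Eis2_coe, logDeriv_apply, div_eq_iff (ModularForm.eta_ne_zero hτ)] at h2
  refine h1.congr_deriv ?_
  refine h2.trans ?_
  ring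

/-- Logarithmic differentiation in `τ` of `ϑ'(0)⁸ = c η²⁴`, with the heat equation converting the
`τ`-derivative of `ϑ'(0)` to `ϑ'''(0)`. -/
lemma Tt_three {τ : ℂ} (hτ : 0 < τ.im) :
    Tt 3 (1 / 2) τ (1 / 2) = Eis2 τ / 4 * Tt 1 (1 / 2) τ (1 / 2) := by
  obtain ⟨c, hc, h⟩ := exists_Tt_one_eta
  have h1 := (hd_Tt_tau 1 (1 / 2) hτ (1 / 2)).pow 8
  have h2 := ((hd_eta hτ).pow 24).cmul c
  have h3 := h1.unique (h2.congr (by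
    filter_upwards [eventually_im_pos hτ] with t ht using h t ht))
  have h4 := h τ hτ
  have h5 := pow_ne_zero 7 (Tt_one_ne_zero hτ)
  refine mul_left_cancel₀ h5 ?_
  norm_num at h3
  linear_combination (1 / 4) * h3 - (1 / 4) * Eis2 τ * h4

/-- The `τ`-derivative of `Tt_three`. -/
lemma Tt_five {τ : ℂ} (hτ : 0 < τ.im) :
    Tt 5 (1 / 2) τ (1 / 2) = (dEis2 τ / 2 + Eis2 τ ^ 2 / 16) * Tt 1 (1 / 2) τ (1 / 2) := by
  have h1 := hd_Tt_tau 3 (1 / 2) hτ (1 / 2)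
  have h2 := ((hd_Eis2 hτ).cmul (1 / 4)).mul (hd_Tt_tau 1 (1 / 2) hτ (1 / 2))
  have h3 := h1.unique (h2.congr (by
    filter_upwards [eventually_im_pos hτ] with t ht
    rw [Tt_three ht]; ring))
  have h4 := Tt_three hτ
  linear_combination 2 * h3 + (1 / 4) * Eis2 τ * h4

/-! ### The bilinear differential equation -/

/-- Two linear relations between theta constants at `2τ`. They form a homogeneous linear system of
two equations, obtained by evaluating the expansions of `prVal` and of its second `u`-derivative at
the zero `u = 1/2`; its determinant is a nonzero multiple of `ϑ'(0)²`. -/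
lemma bilinear_aux {τ : ℂ} (hτ : 0 < τ.im) :
    16 * Tt 4 0 (2 * τ) 0 - 4 * Eis2 τ * Tt 2 0 (2 * τ) 0 + dEis2 τ * Tt 0 0 (2 * τ) 0 = 0 ∧
    16 * Tt 4 (1 / 2) (2 * τ) 0 - 4 * Eis2 τ * Tt 2 (1 / 2) (2 * τ) 0 +
      dEis2 τ * Tt 0 (1 / 2) (2 * τ) 0 = 0 := by
  obtain ⟨h00, h20, h40, h02, h22, h42⟩ :=
    prVal_expand hτ (1 / 2) (ψ := fun k => Tt k (1 / 2) τ (1 / 2)) (fun _ => rfl)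
  have t0 := Tt_half_even (k := 0) (by decide) τ
  have t2 := Tt_half_even (k := 2) (by decide) τ
  have t4 := Tt_half_even (k := 4) (by decide) τ
  have t6 := Tt_half_even (k := 6) (by decide) τ
  have t1 := Tt_one_ne_zero hτ
  have t3 := Tt_three hτ
  have t5 := Tt_five hτ
  have hX : ∀ k, Tt k (1 / 2) (2 * τ) (2 * (1 / 2)) = - Tt k (1 / 2) (2 * τ) 0 := by
    intro k
    have := Tt_add_one k (1 / 2) (2 * τ) 0
    rw [show (0 : ℂ) + 1 = 2 * (1 / 2) by norm_num] at this
    rw [this, show 2 * π * I * ((1 / 2 : ℝ) : ℂ) = π * I by push_cast; ring, Complex.exp_pi_mul_I]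
    ring
  have hY : ∀ k, Tt k 0 (2 * τ) (2 * (1 / 2)) = Tt k 0 (2 * τ) 0 := by
    intro k
    have := Tt_add_one k 0 (2 * τ) 0
    rw [show (0 : ℂ) + 1 = 2 * (1 / 2) by norm_num] at this
    rw [this]; simp
  simp only [prVal, hX, hY, t0, t2, t4, t6, t3, t5] at h00 h20 h40 h02 h22 h42
  norm_num at h00 h20 h40 h02 h22 h42
  have ne : Tt 0 0 (2 * τ) 0 * Tt 2 (1 / 2) (2 * τ) 0 - Tt 0 (1 / 2) (2 * τ) 0 * Tt 2 0 (2 * τ) 0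
      ≠ 0 := by
    intro h
    apply pow_ne_zero 2 t1
    linear_combination (1/2) * h20 - 2 * h
  generalize Tt 1 (1 / 2) τ (1 / 2) = a at *
  generalize Tt 0 0 (2 * τ) 0 = y0 at *
  generalize Tt 2 0 (2 * τ) 0 = y2 at *
  generalize Tt 4 0 (2 * τ) 0 = y4 at *
  generalize Tt 0 (1 / 2) (2 * τ) 0 = x0 at *
  generalize Tt 2 (1 / 2) (2 * τ) 0 = x2 at *
  generalize Tt 4 (1 / 2) (2 * τ) 0 = x4 at *
  have r0 : -x0 * (16 * y4 - 4 * Eis2 τ * y2 + dEis2 τ * y0) +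
      y0 * (16 * x4 - 4 * Eis2 τ * x2 + dEis2 τ * x0) = 0 := by
    linear_combination h40 - Eis2 τ * h20 + dEis2 τ * h00
  have r2 : -x2 * (16 * y4 - 4 * Eis2 τ * y2 + dEis2 τ * y0) +
      y2 * (16 * x4 - 4 * Eis2 τ * x2 + dEis2 τ * x0) = 0 := by
    linear_combination (1 / 4) * (h42 - Eis2 τ * h22 + dEis2 τ * h02)
  constructor
  · refine mul_left_cancel₀ ne ?_
    linear_combination y2 * r0 - y0 * r2
  · refine mul_left_cancel₀ ne ?_
    linear_combination x2 * r0 - x0 * r2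

/-- The bilinear form of the differential equation `℘'' = 6℘² - g₂/2`: by the decoupling in `prVal`
its left-hand side is a combination of the two vanishing constants of `bilinear_aux`. -/
lemma bilinear_Tt {τ : ℂ} (hτ : 0 < τ.im) (u : ℂ) :
    Tt 0 (1 / 2) τ u * Tt 4 (1 / 2) τ u - 4 * Tt 1 (1 / 2) τ u * Tt 3 (1 / 2) τ u +
      3 * Tt 2 (1 / 2) τ u ^ 2 -
      Eis2 τ * (Tt 0 (1 / 2) τ u * Tt 2 (1 / 2) τ u - Tt 1 (1 / 2) τ u ^ 2) +
      1 / 2 * dEis2 τ * Tt 0 (1 / 2) τ u ^ 2 = 0 := by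
  obtain ⟨h00, h20, h40, -, -, -⟩ :=
    prVal_expand hτ u (ψ := fun k => Tt k (1 / 2) τ u) (fun _ => rfl)
  obtain ⟨ha, hb⟩ := bilinear_aux hτ
  simp only [prVal] at h00 h20 h40
  norm_num at h00 h20 h40
  linear_combination (-1/2) * h40 + (1/2) * Eis2 τ * h20 - (1/2) * dEis2 τ * h00 +
    (1/2) * Tt 0 (1 / 2) (2 * τ) (2 * u) * ha + (1/2) * Tt 0 0 (2 * τ) (2 * u) * hb

/-- With `L = (log ϑ)''` (normalised derivatives), this is `ϑ²` times
`L'' + 6 L² - E₂ L + E₂'/2 = 0`, written without division. -/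
lemma bilinear_Th {τ : ℂ} (hτ : 0 < τ.im) (z : ℂ) :
    Th 0 τ z * Th 4 τ z - 4 * Th 1 τ z * Th 3 τ z + 3 * Th 2 τ z ^ 2 -
      Eis2 τ * (Th 0 τ z * Th 2 τ z - Th 1 τ z ^ 2) + 1 / 2 * dEis2 τ * Th 0 τ z ^ 2 = 0 := by
  have h := bilinear_Tt hτ (z + 1 / 2)
  simp only [Th]
  linear_combination I ^ 2 * h

/-! ### The heat operators applied to `ϑ⁴` -/

/-- `heatMod` depends only on the values on `ℍ × ℂ`. -/
lemma heatMod_congr {m k : ℚ} {φ ψ : ℂ → ℂ → ℂ} (h : ∀ t w : ℂ, 0 < t.im → φ t w = ψ t w)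
    {τ : ℂ} (hτ : 0 < τ.im) (z : ℂ) : heatMod m k φ τ z = heatMod m k ψ τ z := by
  have h1 : deriv (fun t => φ t z) τ = deriv (fun t => ψ t z) τ := by
    refine Filter.EventuallyEq.deriv_eq ?_
    filter_upwards [eventually_im_pos hτ] with t ht using h t z ht
  have h2 : φ τ = ψ τ := funext fun w => h τ w hτ
  rw [heatMod, heatMod, heatOp, heatOp, h1, h2]

/-- The modular heat operator of index 2 in terms of normalised derivatives. -/
lemma heatMod_eval {k : ℚ} {ψ : ℂ → ℂ → ℂ} {τ z a c : ℂ} {b : ℂ → ℂ}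
    (ha : HD (fun t => ψ t z) a τ) (hb : ∀ w, HD (ψ τ) (b w) w) (hc : HD b c z) :
    heatMod 2 k ψ τ z = 12 * a - 3 / 2 * c - (2 * (k : ℂ) - 1) / 2 * Eis2 τ * ψ τ z := by
  have hpi : (π : ℂ) ≠ 0 := by exact_mod_cast Real.pi_ne_zero
  have h1 : deriv (ψ τ) = fun w => 2 * π * I * b w := funext fun w => (hb w).deriv
  have h2 : deriv (deriv (ψ τ)) z = 2 * π * I * (2 * π * I * c) := by
    rw [h1]; exact (HasDerivAt.const_mul _ hc).deriv
  rw [heatMod, heatOp, h2, HasDerivAt.deriv ha]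
  push_cast
  field_simp
  linear_combination (12 * c) * I_sq

lemma hd_H_z (i j : ℕ) {τ : ℂ} (hτ : 0 < τ.im) (z : ℂ) :
    HD (fun w => Th i τ w * Th j τ w) (Th (i + 1) τ z * Th j τ z + Th i τ z * Th (j + 1) τ z) z :=
  (hd_Th_z i hτ z).mul (hd_Th_z j hτ z)

lemma hd_H_tau (i j : ℕ) {τ : ℂ} (hτ : 0 < τ.im) (z : ℂ) :
    HD (fun t => Th i t z * Th j t z)
      (1 / 2 * (Th (i + 2) τ z * Th j τ z + Th i τ z * Th (j + 2) τ z)) τ :=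
  ((hd_Th_tau i hτ z).mul (hd_Th_tau j hτ z)).congr_val (by ring)

lemma heat_one {τ : ℂ} (hτ : 0 < τ.im) (z : ℂ) :
    heatMod 2 2 (fun t w => thetaJ t w ^ 4) τ z =
      18 * (Th 0 τ z ^ 3 * Th 2 τ z - Th 0 τ z ^ 2 * Th 1 τ z ^ 2) -
        3 / 2 * (Eis2 τ * Th 0 τ z ^ 4) := by
  rw [heatMod_congr (ψ := fun t w => Th 0 t w ^ 4) (fun t w _ => by rw [thetaJ_eq]) hτ z]
  rw [heatMod_eval (ψ := fun t w => Th 0 t w ^ 4) ((hd_Th_tau 0 hτ z).pow 4)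
    (fun w => (hd_Th_z 0 hτ w).pow 4)
    (((((hd_Th_z 0 hτ z).pow 3).cmul 4).mul (hd_Th_z 1 hτ z)).congr_val rfl)]
  push_cast
  ring

/-- The function `ϑ² (E₂/12 - (log ϑ)'')`, that is `ϑ²` times the normalised Weierstrass function,
written as a polynomial in the derivatives of `ϑ`. -/
def Qf (τ z : ℂ) : ℂ := Eis2 τ / 12 * Th 0 τ z ^ 2 - (Th 0 τ z * Th 2 τ z - Th 1 τ z ^ 2)

lemma hd_Qf_z {τ : ℂ} (hτ : 0 < τ.im) (z : ℂ) : HD (fun w => Qf τ w)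
    (Eis2 τ / 6 * (Th 0 τ z * Th 1 τ z) - (Th 0 τ z * Th 3 τ z - Th 1 τ z * Th 2 τ z)) z :=
  ((((hd_Th_z 0 hτ z).pow 2).cmul (Eis2 τ / 12)).sub
    ((hd_H_z 0 2 hτ z).sub ((hd_Th_z 1 hτ z).pow 2))).congr_val (by push_cast; ring)

lemma hd_Qf_zz {τ : ℂ} (hτ : 0 < τ.im) (z : ℂ) : HD (fun w =>
    Eis2 τ / 6 * (Th 0 τ w * Th 1 τ w) - (Th 0 τ w * Th 3 τ w - Th 1 τ w * Th 2 τ w))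
    (Eis2 τ / 6 * (Th 1 τ z ^ 2 + Th 0 τ z * Th 2 τ z) -
      (Th 0 τ z * Th 4 τ z - Th 2 τ z ^ 2)) z :=
  (((hd_H_z 0 1 hτ z).cmul (Eis2 τ / 6)).sub
    ((hd_H_z 0 3 hτ z).sub (hd_H_z 1 2 hτ z))).congr_val (by ring)

lemma hd_Qf_tau {τ : ℂ} (hτ : 0 < τ.im) (z : ℂ) : HD (fun t => Qf t z)
    (dEis2 τ / 12 * Th 0 τ z ^ 2 + Eis2 τ / 12 * (Th 0 τ z * Th 2 τ z) -
      (1 / 2 * Th 2 τ z ^ 2 + 1 / 2 * (Th 0 τ z * Th 4 τ z) - Th 1 τ z * Th 3 τ z)) τ :=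
  ((((hd_Eis2 hτ).cmul (1 / 12)).mul ((hd_Th_tau 0 hτ z).pow 2)).sub
    ((hd_H_tau 0 2 hτ z).sub ((hd_Th_tau 1 hτ z).pow 2))).congr
      (.of_forall fun t => by simp only [Qf]; ring) |>.congr_val (by push_cast; ring)

/-- The second application of the heat operator; `bilinear_Th` eliminates the fourth derivative. -/
lemma heat_two {τ : ℂ} (hτ : 0 < τ.im) (z : ℂ) :
    heatMod 2 4 (heatMod 2 2 (fun t w => thetaJ t w ^ 4)) τ z =
      54 * Qf τ z ^ 2 + 39 / 8 * (Eis4 τ * Th 0 τ z ^ 4) := by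
  rw [heatMod_congr (ψ := fun t w => -18 * (Th 0 t w ^ 2 * Qf t w))
    (fun t w ht => by rw [heat_one ht, Qf]; ring) hτ z]
  have hb : ∀ w, HD (fun w => -18 * (Th 0 τ w ^ 2 * Qf τ w)) _ w := fun w =>
    (((hd_Th_z 0 hτ w).pow 2).mul (hd_Qf_z hτ w)).cmul (-18)
  rw [heatMod_eval (ψ := fun t w => -18 * (Th 0 t w ^ 2 * Qf t w))
    ((((hd_Th_tau 0 hτ z).pow 2).mul (hd_Qf_tau hτ z)).cmul (-18)) hb
    (((((((hd_Th_z 0 hτ z).pow 1).cmul 2).mul (hd_Th_z 1 hτ z)).mul (hd_Qf_z hτ z)).add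
      (((hd_Th_z 0 hτ z).pow 2).mul (hd_Qf_zz hτ z))).cmul (-18))]
  have hB := bilinear_Th hτ z
  have hR := ramanujan2 hτ
  rw [hR] at hB ⊢
  simp only [Qf]
  push_cast
  linear_combination (81 * Th 0 τ z ^ 2) * hB

/-- The second derivative `(q d/dq)² E₂`, in the form given by differentiating `ramanujan2`. -/
def d2Eis2 (τ : ℂ) : ℂ := (2 * Eis2 τ * dEis2 τ - dEis4 τ) / 12

lemma hd_dEis2 {τ : ℂ} (hτ : 0 < τ.im) : HD dEis2 (d2Eis2 τ) τ :=
  (((((hd_Eis2 hτ).pow 2).sub (hd_Eis4 hτ)).cmul (1 / 12)).congr (by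
    filter_upwards [eventually_im_pos hτ] with t ht
    rw [ramanujan2 ht]; ring)).congr_val (by rw [d2Eis2]; push_cast; ring)

/-- The cubic equation `℘'² = 4℘³ - g₂℘ - g₃` for the second logarithmic derivative `L` of `ϑ`:
`L'² + 4 L³ - E₂ L² + E₂' L - E₂''/6 = 0`. The factor `ϑ⁴` is enough to clear denominators, since
the first bracket is, up to a constant, the discriminant of the binary cubic with coefficients
`ϑ_0, 3 ϑ_1, 3 ϑ_2, ϑ_3`. -/
lemma cubic_Th {τ : ℂ} (hτ : 0 < τ.im) (z : ℂ) :
    (Th 0 τ z ^ 2 * Th 3 τ z ^ 2 - 6 * Th 0 τ z * Th 1 τ z * Th 2 τ z * Th 3 τ z +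
        4 * Th 0 τ z * Th 2 τ z ^ 3 + 4 * Th 1 τ z ^ 3 * Th 3 τ z -
        3 * Th 1 τ z ^ 2 * Th 2 τ z ^ 2) -
      Eis2 τ * (Th 0 τ z * Th 2 τ z - Th 1 τ z ^ 2) ^ 2 +
      dEis2 τ * (Th 0 τ z * Th 2 τ z - Th 1 τ z ^ 2) * Th 0 τ z ^ 2 -
      d2Eis2 τ / 6 * Th 0 τ z ^ 4 = 0 := by
  have hB := bilinear_Th hτ z
  have hB1 : ∀ w, Th 0 τ w * Th 5 τ w - 3 * (Th 1 τ w * Th 4 τ w) + 2 * (Th 2 τ w * Th 3 τ w) -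
      Eis2 τ * (Th 0 τ w * Th 3 τ w - Th 1 τ w * Th 2 τ w) +
      dEis2 τ * (Th 0 τ w * Th 1 τ w) = 0 := by
    intro w
    refine HD.unique ?_ ((HD.const 0 w).congr (.of_forall fun v => bilinear_Th hτ v))
    refine ((((((hd_H_z 0 4 hτ w).sub ((hd_H_z 1 3 hτ w).cmul 4)).add
      ((hd_H_z 2 2 hτ w).cmul 3)).sub
      (((hd_H_z 0 2 hτ w).sub (hd_H_z 1 1 hτ w)).cmul (Eis2 τ))).add
      ((hd_H_z 0 0 hτ w).cmul (1 / 2 * dEis2 τ))).congr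
        (.of_forall fun v => by ring)).congr_val (by ring)
  -- the second `z`-derivative and the `τ`-derivative of the bilinear identity
  have hB2 := HD.unique (((((hd_H_z 0 5 hτ z).sub ((hd_H_z 1 4 hτ z).cmul 3)).add
      ((hd_H_z 2 3 hτ z).cmul 2)).sub
      (((hd_H_z 0 3 hτ z).sub (hd_H_z 1 2 hτ z)).cmul (Eis2 τ))).add
      ((hd_H_z 0 1 hτ z).cmul (dEis2 τ))) ((HD.const 0 z).congr (.of_forall hB1))
  have hBt := HD.unique ((((((hd_H_tau 0 4 hτ z).sub ((hd_H_tau 1 3 hτ z).cmul 4)).add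
      ((hd_H_tau 2 2 hτ z).cmul 3)).sub
      ((hd_Eis2 hτ).mul ((hd_H_tau 0 2 hτ z).sub (hd_H_tau 1 1 hτ z)))).add
      (((hd_dEis2 hτ).cmul (1 / 2)).mul (hd_H_tau 0 0 hτ z)))) ((HD.const 0 τ).congr (by
        filter_upwards [eventually_im_pos hτ] with t ht
        linear_combination bilinear_Th ht z))
  -- `-3` times the claim is `ϑ² (D - ∂²/2) B + ϑ ϑ' ∂B - (ϑ'² + 4 (ϑ ϑ'' - ϑ'²)) B`
  linear_combination (-1 / 3) * (Th 0 τ z ^ 2 * (hBt - 1 / 2 * hB2) +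
    Th 0 τ z * Th 1 τ z * hB1 z -
    (Th 1 τ z ^ 2 + 4 * (Th 0 τ z * Th 2 τ z - Th 1 τ z ^ 2)) * hB)

/-- degree-3 modular differential equation for `ϑ⁴`:
`H^{(2)}_{6}H^{(2)}_{4}H^{(2)}_{2}(ϑ⁴) − (23/4)·E₄·H^{(2)}_{2}(ϑ⁴) + (81/4)·E₆·ϑ⁴ = 0`. -/
theorem statement13 (τ z : ℂ) (hτ : 0 < τ.im) :
    heatMod 2 6 (heatMod 2 4 (heatMod 2 2 (fun t w => thetaJ t w ^ 4))) τ z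
      - (23/4) * Eis4 τ * heatMod 2 2 (fun t w => thetaJ t w ^ 4) τ z
      + (81/4) * Eis6 τ * thetaJ τ z ^ 4 = 0 := by
  rw [heatMod_congr (ψ := fun t w => 54 * Qf t w ^ 2 + 39 / 8 * (Eis4 t * Th 0 t w ^ 4))
    (fun t w ht => heat_two ht w) hτ z, heat_one hτ, thetaJ_eq]
  have hb : ∀ w, HD (fun w => 54 * Qf τ w ^ 2 + 39 / 8 * (Eis4 τ * Th 0 τ w ^ 4)) _ w := fun w =>
    (((hd_Qf_z hτ w).pow 2).cmul 54).add
      ((((hd_Th_z 0 hτ w).pow 4).cmul (Eis4 τ)).cmul (39 / 8))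
  rw [heatMod_eval (ψ := fun t w => 54 * Qf t w ^ 2 + 39 / 8 * (Eis4 t * Th 0 t w ^ 4))
    ((((hd_Qf_tau hτ z).pow 2).cmul 54).add
      (((hd_Eis4 hτ).mul ((hd_Th_tau 0 hτ z).pow 4)).cmul (39 / 8))) hb
    ((((((hd_Qf_z hτ z).pow 1).cmul 2).mul (hd_Qf_zz hτ z)).cmul 54).add
      ((((((hd_Th_z 0 hτ z).pow 3).cmul 4).mul (hd_Th_z 1 hτ z)).cmul (Eis4 τ)).cmul (39 / 8)))]
  have hB := bilinear_Th hτ z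
  have hC := cubic_Th hτ z
  rw [d2Eis2] at hC
  rw [ramanujan2 hτ, ramanujan4 hτ] at hC ⊢
  rw [ramanujan2 hτ] at hB
  simp only [Qf]
  push_cast
  linear_combination (-486 *
    (Eis2 τ / 12 * Th 0 τ z ^ 2 - (Th 0 τ z * Th 2 τ z - Th 1 τ z ^ 2))) * hB - 162 * hC
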